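/- Let ψ be an n-qubit stabilizer state with independent generating set s_1, g_2, …, g_n of 𝒮(ψ) such that Z_1 anticommutes with s_1 and commutes with each g_i (i ≥ 2), let 𝒢 be the group generated by {g_2,…,g_n}, and let φ = T_1ψ. Let M ∈ 𝒫_n be Hermitian, let m ∈ {+1,−1}, let Π = (I + mM)/2, and suppose Πφ ≠ 0. Then the normalized post-measurement state Πφ/‖Πφ‖ is a stabilizer state if and only if there exists g ∈ 𝒢 such that M = ±Z_1·g, or M = ±s_1·g, or M = ±i·s_1·Z_1·g. -/

import Mathlib

noncomputable section
namespace PaperFormal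

open Matrix

/-- The space of `n`-qubit operators: matrices indexed by computational basis states. -/
abbrev QMat (n : ℕ) := Matrix (Fin n → Fin 2) (Fin n → Fin 2) ℂ

/-- The space of `n`-qubit state vectors. -/
abbrev QVec (n : ℕ) := (Fin n → Fin 2) → ℂ

def σI : Matrix (Fin 2) (Fin 2) ℂ := 1
def σX : Matrix (Fin 2) (Fin 2) ℂ := !![0, 1; 1, 0]
def σY : Matrix (Fin 2) (Fin 2) ℂ := !![0, -Complex.I; Complex.I, 0]
def σZ : Matrix (Fin 2) (Fin 2) ℂ := !![1, 0; 0, -1]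

def IsPauliFactor (m : Matrix (Fin 2) (Fin 2) ℂ) : Prop :=
  m = σI ∨ m = σX ∨ m = σY ∨ m = σZ

/-- Kronecker product over `n` qubits of single-qubit matrices. -/
def kron {n : ℕ} (σ : Fin n → Matrix (Fin 2) (Fin 2) ℂ) : QMat n :=
  fun v w => ∏ j, σ j (v j) (w j)

/-- Membership in the `n`-qubit Pauli group `𝒫_n`:
`M = i^k σ_1 ⊗ ⋯ ⊗ σ_n` with each `σ_j ∈ {I, X, Y, Z}`. -/
def IsPauli {n : ℕ} (M : QMat n) : Prop :=
  ∃ (k : Fin 4) (σ : Fin n → Matrix (Fin 2) (Fin 2) ℂ),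
    (∀ j, IsPauliFactor (σ j)) ∧ M = Complex.I ^ (k : ℕ) • kron σ

/-- A Pauli operator supported on the set `A` of qubits (identity factors outside `A`). -/
def PauliSupportedOn {n : ℕ} (M : QMat n) (A : Set (Fin n)) : Prop :=
  ∃ (k : Fin 4) (σ : Fin n → Matrix (Fin 2) (Fin 2) ℂ),
    (∀ j, IsPauliFactor (σ j)) ∧ (∀ j, j ∉ A → σ j = σI) ∧
    M = Complex.I ^ (k : ℕ) • kron σ

/-- The Pauli `M` has identity (`j`-th Kronecker factor proportional to identity) at qubit `j`. -/
def PauliTrivialAt {n : ℕ} (M : QMat n) (j : Fin n) : Prop :=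
  PauliSupportedOn M {i | i ≠ j}

/-- The single-qubit operator `m` placed at qubit `j` (identity elsewhere). -/
def opAt {n : ℕ} (j : Fin n) (m : Matrix (Fin 2) (Fin 2) ℂ) : QMat n :=
  kron (fun i => if i = j then m else σI)

/-- Inner product `⟨φ, ψ⟩` (antilinear in the first argument). -/
def innerC {n : ℕ} (φ ψ : QVec n) : ℂ := ∑ v, (starRingEnd ℂ) (φ v) * ψ v

/-- Squared norm `‖ψ‖²`. -/
def nrmSq {n : ℕ} (ψ : QVec n) : ℝ := ∑ v, Complex.normSq (ψ v)

/-- The stabilizer group `𝒮(ψ) = {P ∈ 𝒫_n : Pψ = ψ}`. -/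
def stabGroup {n : ℕ} (ψ : QVec n) : Set (QMat n) :=
  {P | IsPauli P ∧ P.mulVec ψ = ψ}

/-- An `n`-qubit pure stabilizer state: a unit vector whose stabilizer group has `2^n` elements. -/
def IsStabState {n : ℕ} (ψ : QVec n) : Prop :=
  nrmSq ψ = 1 ∧ (stabGroup ψ).ncard = 2 ^ n

/-- The product `∏ i, g i ^ α i` (in the fixed order of indices). -/
def prodPow {n m : ℕ} (g : Fin m → QMat n) (α : Fin m → ZMod 2) : QMat n :=
  (List.ofFn fun i => g i ^ (α i).val).prod

/-- `g` is an independent generating set of `𝒮(ψ)`: the map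
`(α_i) ↦ ∏ g_i^{α_i}` is a bijection from `(ℤ/2)^m` onto `𝒮(ψ)`. -/
def IsIndepGenSet {n m : ℕ} (ψ : QVec n) (g : Fin m → QMat n) : Prop :=
  (∀ i, g i ∈ stabGroup ψ) ∧ Function.Injective (prodPow g) ∧
    Set.range (prodPow g) = stabGroup ψ

/-- The `T` gate `diag(1, e^{iπ/4})`. -/
def Tgate : Matrix (Fin 2) (Fin 2) ℂ :=
  !![1, 0; 0, Complex.exp (Real.pi * Complex.I / 4)]

/-- The four single-qubit Pauli matrices, indexed by `Fin 4`. -/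
def pauliFactor (t : Fin 4) : Matrix (Fin 2) (Fin 2) ℂ := ![σI, σX, σY, σZ] t

/-- The phase-free Pauli string with factors indexed by `t`. -/
def pauliString {n : ℕ} (t : Fin n → Fin 4) : QMat n := kron fun j => pauliFactor (t j)

lemma isPauliFactor_pauliFactor (t : Fin 4) : IsPauliFactor (pauliFactor t) := by
  fin_cases t <;> simp [IsPauliFactor, pauliFactor]

lemma IsPauliFactor.exists_eq {m : Matrix (Fin 2) (Fin 2) ℂ} (h : IsPauliFactor m) :
    ∃ t, m = pauliFactor t := by
  rcases h with h | h | h | h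
  exacts [⟨0, h⟩, ⟨1, h⟩, ⟨2, h⟩, ⟨3, h⟩]

lemma isPauli_iff {n : ℕ} {M : QMat n} :
    IsPauli M ↔ ∃ (k : Fin 4) (t : Fin n → Fin 4), M = Complex.I ^ (k : ℕ) • pauliString t := by
  constructor
  · rintro ⟨k, σ, hσ, rfl⟩
    choose t ht using fun j => (hσ j).exists_eq
    exact ⟨k, t, by rw [pauliString, ← funext ht]⟩
  · rintro ⟨k, t, rfl⟩
    exact ⟨k, _, fun j => isPauliFactor_pauliFactor _, rfl⟩

lemma sum_pauliFactor_mul_star (a b c d : Fin 2) :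
    ∑ t, pauliFactor t a b * star (pauliFactor t c d) = if a = c ∧ b = d then 2 else 0 := by
  fin_cases a <;> fin_cases b <;> fin_cases c <;> fin_cases d <;>
    simp [Fin.sum_univ_four, pauliFactor, σI, σX, σY, σZ] <;> norm_num

lemma sum_entries_pauliFactor_mul_star (s t : Fin 4) :
    ∑ a, ∑ b, pauliFactor s a b * star (pauliFactor t a b) = if s = t then 2 else 0 := by
  fin_cases s <;> fin_cases t <;>
    simp [pauliFactor, σI, σX, σY, σZ] <;> norm_num

lemma exists_pauliFactor_mul (s t : Fin 4) :
    ∃ (k : ℕ) (u : Fin 4), pauliFactor s * pauliFactor t = Complex.I ^ k • pauliFactor u := by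
  fin_cases s <;> fin_cases t
  exacts [⟨0, 0, by simp [pauliFactor, σI]⟩, ⟨0, 1, by simp [pauliFactor, σI]⟩,
    ⟨0, 2, by simp [pauliFactor, σI]⟩, ⟨0, 3, by simp [pauliFactor, σI]⟩,
    ⟨0, 1, by simp [pauliFactor, σI]⟩, ⟨0, 0, by simp [pauliFactor, σI, σX, one_fin_two]⟩,
    ⟨1, 3, by simp [pauliFactor, σX, σY, σZ]⟩, ⟨3, 2, by simp [pauliFactor, σX, σY, σZ]⟩,
    ⟨0, 2, by simp [pauliFactor, σI]⟩, ⟨3, 3, by simp [pauliFactor, σX, σY, σZ]⟩,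
    ⟨0, 0, by simp [pauliFactor, σI, σY, one_fin_two]⟩, ⟨1, 1, by simp [pauliFactor, σX, σY, σZ]⟩,
    ⟨0, 3, by simp [pauliFactor, σI]⟩, ⟨1, 2, by simp [pauliFactor, σX, σY, σZ]⟩,
    ⟨3, 1, by simp [pauliFactor, σX, σY, σZ]⟩, ⟨0, 0, by simp [pauliFactor, σI, σZ, one_fin_two]⟩]

lemma pauliFactor_mul_comm (s t : Fin 4) :
    ∃ k : ℕ, pauliFactor s * pauliFactor t = (-1 : ℂ) ^ k • (pauliFactor t * pauliFactor s) := by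
  by_cases h : s = 0 ∨ t = 0 ∨ s = t
  · refine ⟨0, ?_⟩
    rcases h with rfl | rfl | rfl <;> simp [pauliFactor, σI]
  · refine ⟨1, ?_⟩
    fin_cases s <;> fin_cases t <;> simp at h <;> simp [pauliFactor, σX, σY, σZ]

lemma pauliFactor_mul_self (t : Fin 4) : pauliFactor t * pauliFactor t = 1 := by
  fin_cases t <;> simp [pauliFactor, σI, σX, σY, σZ, one_fin_two]

lemma star_pauliFactor (t : Fin 4) (a b : Fin 2) :
    star (pauliFactor t b a) = pauliFactor t a b := by
  fin_cases t <;> fin_cases a <;> fin_cases b <;> simp [pauliFactor, σI, σX, σY, σZ]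

section PauliGroup

variable {n : ℕ}

lemma kron_mul (σ τ : Fin n → Matrix (Fin 2) (Fin 2) ℂ) :
    kron σ * kron τ = kron fun j => σ j * τ j := by
  ext v w
  simp only [Matrix.mul_apply, kron, ← Finset.prod_mul_distrib]
  rw [Finset.prod_univ_sum, Fintype.piFinset_univ]

lemma kron_smul (c : Fin n → ℂ) (σ : Fin n → Matrix (Fin 2) (Fin 2) ℂ) :
    (kron fun j => c j • σ j) = (∏ j, c j) • kron σ := by
  ext v w
  simp [kron, Finset.prod_mul_distrib]

lemma kron_one : kron (fun _ : Fin n => (1 : Matrix (Fin 2) (Fin 2) ℂ)) = 1 := by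
  ext v w
  simp only [kron, Matrix.one_apply, Finset.prod_ite_zero, Finset.prod_const_one, funext_iff,
    Finset.mem_univ, true_imp_iff]

lemma exists_pauliString_mul (s t : Fin n → Fin 4) :
    ∃ (k : ℕ) (u : Fin n → Fin 4),
      pauliString s * pauliString t = Complex.I ^ k • pauliString u := by
  choose k u h using fun j => exists_pauliFactor_mul (s j) (t j)
  exact ⟨∑ j, k j, u, by
    rw [pauliString, pauliString, kron_mul, funext h, kron_smul, Finset.prod_pow_eq_pow_sum,
      pauliString]⟩

lemma pauliString_mul_comm (s t : Fin n → Fin 4) :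
    ∃ k : ℕ, pauliString s * pauliString t = (-1 : ℂ) ^ k • (pauliString t * pauliString s) := by
  choose k h using fun j => pauliFactor_mul_comm (s j) (t j)
  exact ⟨∑ j, k j, by
    rw [pauliString, pauliString, kron_mul, kron_mul, funext h, kron_smul,
      Finset.prod_pow_eq_pow_sum]⟩

lemma pauliString_mul_self (t : Fin n → Fin 4) : pauliString t * pauliString t = 1 := by
  simp only [pauliString, kron_mul, pauliFactor_mul_self, kron_one]

lemma pauliString_conjTranspose (t : Fin n → Fin 4) : (pauliString t)ᴴ = pauliString t := by
  ext v w
  simp only [Matrix.conjTranspose_apply, pauliString, kron, star_prod, star_pauliFactor]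

lemma sum_pauliString_mul_star (a b c d : Fin n → Fin 2) :
    ∑ t : Fin n → Fin 4, pauliString t a b * star (pauliString t c d)
      = if a = c ∧ b = d then 2 ^ n else 0 := by
  simp only [pauliString, kron, star_prod, ← Finset.prod_mul_distrib]
  rw [← Fintype.piFinset_univ, ← Finset.prod_univ_sum
    (f := fun j t => pauliFactor t (a j) (b j) * star (pauliFactor t (c j) (d j)))]
  simp only [sum_pauliFactor_mul_star, Finset.prod_ite_zero, Finset.prod_const, Finset.card_univ,
    Fintype.card_fin, funext_iff, Finset.mem_univ, true_imp_iff, forall_and]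

lemma sum_entries_pauliString_mul_star (s t : Fin n → Fin 4) :
    ∑ a, ∑ b, pauliString s a b * star (pauliString t a b) = if s = t then 2 ^ n else 0 := by
  simp only [pauliString, kron, star_prod, ← Finset.prod_mul_distrib]
  have h (a : Fin n → Fin 2) := Finset.prod_univ_sum (fun _ : Fin n => Finset.univ)
    (fun j b => pauliFactor (s j) (a j) b * star (pauliFactor (t j) (a j) b))
  simp only [Fintype.piFinset_univ] at h
  have h' := Finset.prod_univ_sum (fun _ : Fin n => Finset.univ)
    (fun j a => ∑ b, pauliFactor (s j) a b * star (pauliFactor (t j) a b))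
  simp only [Fintype.piFinset_univ] at h'
  simp only [← h, ← h', sum_entries_pauliFactor_mul_star, Finset.prod_ite_zero, Finset.prod_const,
    Finset.card_univ, Fintype.card_fin, funext_iff, Finset.mem_univ, true_imp_iff]

lemma pauliString_eq_of_smul_eq {s t : Fin n → Fin 4} {c d : ℂ} (hc : c ≠ 0)
    (h : c • pauliString s = d • pauliString t) : s = t := by
  by_contra hst
  have key : ∑ a, ∑ b, (c • pauliString s) a b * star (pauliString s a b)
      = ∑ a, ∑ b, (d • pauliString t) a b * star (pauliString s a b) := by rw [h]
  simp only [Matrix.smul_apply, smul_eq_mul, mul_assoc, ← Finset.mul_sum,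
    sum_entries_pauliString_mul_star, if_neg (Ne.symm hst)] at key
  simp [hc] at key

lemma dotProduct_mulVec_eq_sum_prod (P : QMat n) (x y : QVec n) :
    x ⬝ᵥ P *ᵥ y = ∑ p : (Fin n → Fin 2) × (Fin n → Fin 2), x p.1 * y p.2 * P p.1 p.2 := by
  simp only [dotProduct, mulVec, Finset.mul_sum, Fintype.sum_prod_type]
  exact Finset.sum_congr rfl fun a _ => Finset.sum_congr rfl fun b _ => by ring

lemma sum_expectation_mul_star (x y : QVec n) :
    ∑ t : Fin n → Fin 4, (star x ⬝ᵥ pauliString t *ᵥ x) * star (star y ⬝ᵥ pauliString t *ᵥ y)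
      = 2 ^ n * ((star x ⬝ᵥ y) * (star y ⬝ᵥ x)) := by
  have expand (t : Fin n → Fin 4) :
      (star x ⬝ᵥ pauliString t *ᵥ x) * star (star y ⬝ᵥ pauliString t *ᵥ y)
        = ∑ p : (Fin n → Fin 2) × (Fin n → Fin 2), ∑ q : (Fin n → Fin 2) × (Fin n → Fin 2),
          (star x p.1 * x p.2 * star (star y q.1 * y q.2)) *
          (pauliString t p.1 p.2 * star (pauliString t q.1 q.2)) := by
    rw [dotProduct_mulVec_eq_sum_prod, dotProduct_mulVec_eq_sum_prod, star_sum, Finset.sum_mul_sum]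
    refine Finset.sum_congr rfl fun p _ => Finset.sum_congr rfl fun q _ => ?_
    rw [star_mul' (star y q.1 * y q.2)]
    ring
  simp only [expand]
  rw [Finset.sum_comm]
  have collapse (p : (Fin n → Fin 2) × (Fin n → Fin 2)) :
      ∑ t : Fin n → Fin 4, ∑ q : (Fin n → Fin 2) × (Fin n → Fin 2),
          (star x p.1 * x p.2 * star (star y q.1 * y q.2)) *
          (pauliString t p.1 p.2 * star (pauliString t q.1 q.2))
        = 2 ^ n * ((star x p.1 * y p.1) * (star y p.2 * x p.2)) := by
    rw [Finset.sum_comm]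
    simp only [← Finset.mul_sum, sum_pauliString_mul_star, ← Prod.ext_iff, mul_ite, mul_zero,
      Finset.sum_ite_eq, Finset.mem_univ, if_true, star_mul', Pi.star_apply, star_star]
    ring
  rw [Finset.sum_congr rfl fun p _ => collapse p, ← Finset.mul_sum, Fintype.sum_prod_type,
    dotProduct, dotProduct, Finset.sum_mul_sum]

lemma exists_eq_I_pow {c : ℂ} (h : c ^ 4 = 1) : ∃ k : Fin 4, c = Complex.I ^ (k : ℕ) := by
  have h2 : (c - 1) * ((c + 1) * ((c - Complex.I) * (c + Complex.I))) = 0 := by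
    linear_combination h + (1 - c ^ 2) * Complex.I_sq
  rcases mul_eq_zero.1 h2 with h | h
  · exact ⟨0, by simpa using sub_eq_zero.1 h⟩
  rcases mul_eq_zero.1 h with h | h
  · exact ⟨2, by simpa using eq_neg_of_add_eq_zero_left h⟩
  rcases mul_eq_zero.1 h with h | h
  · exact ⟨1, by simpa using sub_eq_zero.1 h⟩
  · exact ⟨3, by simpa using eq_neg_of_add_eq_zero_left h⟩

lemma IsPauli.smul {P : QMat n} (hP : IsPauli P) {c : ℂ} (hc : c ^ 4 = 1) : IsPauli (c • P) := by
  obtain ⟨k, t, rfl⟩ := isPauli_iff.1 hP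
  obtain ⟨l, hl⟩ := exists_eq_I_pow (c := c * Complex.I ^ (k : ℕ)) (by
    rw [mul_pow, hc, ← pow_mul, mul_comm (k : ℕ), pow_mul, Complex.I_pow_four, one_pow, one_mul])
  exact isPauli_iff.2 ⟨l, t, by rw [smul_smul, hl]⟩

lemma I_pow_pow_four (k : ℕ) : (Complex.I ^ k) ^ 4 = 1 := by
  rw [← pow_mul, mul_comm, pow_mul, Complex.I_pow_four, one_pow]

lemma isPauli_pauliString (t : Fin n → Fin 4) : IsPauli (pauliString t) :=
  isPauli_iff.2 ⟨0, t, by simp⟩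

lemma IsPauli.mul {P R : QMat n} (hP : IsPauli P) (hR : IsPauli R) : IsPauli (P * R) := by
  obtain ⟨k, s, rfl⟩ := isPauli_iff.1 hP
  obtain ⟨l, t, rfl⟩ := isPauli_iff.1 hR
  obtain ⟨j, u, h⟩ := exists_pauliString_mul s t
  rw [smul_mul_smul_comm, h]
  exact ((isPauli_pauliString u).smul (I_pow_pow_four j)).smul
    (by rw [← pow_add, I_pow_pow_four])

lemma IsPauli.commute_or_anticommute {P R : QMat n} (hP : IsPauli P) (hR : IsPauli R) :
    P * R = R * P ∨ P * R = -(R * P) := by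
  obtain ⟨k, s, rfl⟩ := isPauli_iff.1 hP
  obtain ⟨l, t, rfl⟩ := isPauli_iff.1 hR
  obtain ⟨j, h⟩ := pauliString_mul_comm s t
  rw [smul_mul_smul_comm, smul_mul_smul_comm, h, mul_comm (Complex.I ^ (l : ℕ))]
  rcases neg_one_pow_eq_or ℂ j with hj | hj <;> simp [hj]

lemma IsPauli.conjTranspose_mul_self {P : QMat n} (hP : IsPauli P) : Pᴴ * P = 1 := by
  obtain ⟨k, s, rfl⟩ := isPauli_iff.1 hP
  rw [conjTranspose_smul, pauliString_conjTranspose, smul_mul_smul_comm, pauliString_mul_self,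
    star_pow, ← mul_pow]
  simp

lemma IsPauli.mul_self {P : QMat n} (hP : IsPauli P) : P * P = 1 ∨ P * P = -1 := by
  obtain ⟨k, s, rfl⟩ := isPauli_iff.1 hP
  rw [smul_mul_smul_comm, pauliString_mul_self, ← mul_pow, Complex.I_mul_I]
  rcases neg_one_pow_eq_or ℂ (k : ℕ) with hj | hj <;> simp [hj]

lemma IsPauli.dotProduct_mulVec_mulVec {R : QMat n} (hR : IsPauli R) (x y : QVec n) :
    star (R *ᵥ x) ⬝ᵥ R *ᵥ y = star x ⬝ᵥ y := by
  rw [star_mulVec, dotProduct_mulVec, vecMul_vecMul, ← dotProduct_mulVec,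
    hR.conjTranspose_mul_self, one_mulVec]

/-- A Pauli anticommuting with a stabilizer of `x` has vanishing expectation in `x`. -/
lemma expectation_eq_zero_of_anticommute {R P : QMat n} (hR : IsPauli R) {x : QVec n}
    (hx : R *ᵥ x = x) (h : P * R = -(R * P)) : star x ⬝ᵥ P *ᵥ x = 0 := by
  have key : star x ⬝ᵥ P *ᵥ x = -(star x ⬝ᵥ P *ᵥ x) := by
    calc star x ⬝ᵥ P *ᵥ x = star (R *ᵥ x) ⬝ᵥ P *ᵥ (R *ᵥ x) := by rw [hx]
      _ = -(star (R *ᵥ x) ⬝ᵥ R *ᵥ (P *ᵥ x)) := by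
        rw [mulVec_mulVec, h, neg_mulVec, dotProduct_neg, mulVec_mulVec]
      _ = _ := by rw [hR.dotProduct_mulVec_mulVec]
  exact self_eq_neg.1 key

lemma mulVec_mul_self_of_eigen {P : QMat n} {x : QVec n} {c : ℂ} (h : P *ᵥ x = c • x) :
    (P * P) *ᵥ x = c ^ 2 • x := by
  rw [← mulVec_mulVec, h, mulVec_smul, h, smul_smul, sq]

lemma IsPauli.eigenvalue_sq {P : QMat n} (hP : IsPauli P) {x : QVec n} (hx : x ≠ 0) {c : ℂ}
    (h : P *ᵥ x = c • x) : c ^ 2 = 1 ∨ c ^ 2 = -1 := by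
  have h2 := mulVec_mul_self_of_eigen h
  rcases hP.mul_self with hP | hP
  · left
    rw [hP, one_mulVec] at h2
    exact smul_left_injective ℂ hx (by simpa using h2.symm)
  · right
    rw [hP, neg_mulVec, one_mulVec] at h2
    exact smul_left_injective ℂ hx (by simpa using h2.symm)

lemma IsPauli.eigenvalue_pow_four {P : QMat n} (hP : IsPauli P) {x : QVec n} (hx : x ≠ 0) {c : ℂ}
    (h : P *ᵥ x = c • x) : c ^ 4 = 1 := by
  rw [show c ^ 4 = (c ^ 2) ^ 2 by ring]
  rcases hP.eigenvalue_sq hx h with h | h <;> rw [h] <;> norm_num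

/-- Rescaling a Pauli by the inverse of its eigenvalue yields a stabilizer. -/
lemma IsPauli.inv_smul_mem_stabGroup {P : QMat n} (hP : IsPauli P) {x : QVec n} (hx : x ≠ 0)
    {c : ℂ} (h : P *ᵥ x = c • x) : c ≠ 0 ∧ c⁻¹ • P ∈ stabGroup x := by
  have h4 := hP.eigenvalue_pow_four hx h
  have hc : c ≠ 0 := by rintro rfl; norm_num at h4
  exact ⟨hc, hP.smul (by rw [inv_pow, h4, inv_one]), by
    rw [smul_mulVec, h, smul_smul, inv_mul_cancel₀ hc, one_smul]⟩

lemma pauliString_eigenvalue_sq (t : Fin n → Fin 4) {x : QVec n} (hx : x ≠ 0) {c : ℂ}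
    (h : pauliString t *ᵥ x = c • x) : c ^ 2 = 1 := by
  have h2 := mulVec_mul_self_of_eigen h
  rw [pauliString_mul_self, one_mulVec] at h2
  exact smul_left_injective ℂ hx (by simpa using h2.symm)

/-- Every Pauli either has vanishing expectation in `x` or has `x` as an eigenvector. -/
def PauliDichotomy (x : QVec n) : Prop :=
  ∀ P : QMat n, IsPauli P → star x ⬝ᵥ P *ᵥ x = 0 ∨ ∃ c : ℂ, P *ᵥ x = c • x

lemma star_dotProduct_self (x : QVec n) : star x ⬝ᵥ x = (nrmSq x : ℂ) := by
  simp [dotProduct, nrmSq, Complex.normSq_eq_conj_mul_self]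

open scoped ComplexOrder in
lemma star_dotProduct_self_ne_zero {x : QVec n} (hx : x ≠ 0) : star x ⬝ᵥ x ≠ 0 :=
  fun h => hx (dotProduct_star_self_eq_zero.1 h)

lemma nrmSq_pos {x : QVec n} (hx : x ≠ 0) : 0 < nrmSq x := by
  have h0 : 0 ≤ nrmSq x := Finset.sum_nonneg fun _ _ => Complex.normSq_nonneg _
  refine h0.lt_of_ne fun h => star_dotProduct_self_ne_zero hx ?_
  rw [star_dotProduct_self, ← h, Complex.ofReal_zero]

open scoped Classical in
lemma ncard_stabGroup {x : QVec n} (hx : x ≠ 0) :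
    (stabGroup x).ncard
      = (Finset.univ.filter fun t : Fin n → Fin 4 => ∃ c : ℂ, pauliString t *ᵥ x = c • x).card := by
  set A := Finset.univ.filter fun t : Fin n → Fin 4 => ∃ c : ℂ, pauliString t *ᵥ x = c • x
  have hN := star_dotProduct_self_ne_zero hx
  let f : (Fin n → Fin 4) → QMat n := fun t =>
    ((star x ⬝ᵥ pauliString t *ᵥ x) / (star x ⬝ᵥ x))⁻¹ • pauliString t
  have hf {t : Fin n → Fin 4} {c : ℂ} (h : pauliString t *ᵥ x = c • x) :
      f t = c⁻¹ • pauliString t := by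
    simp only [f]
    rw [h, dotProduct_smul, smul_eq_mul, mul_div_cancel_right₀ _ hN]
  have himage : stabGroup x = f '' A := by
    ext P
    constructor
    · rintro ⟨hP, hPx⟩
      obtain ⟨k, t, rfl⟩ := isPauli_iff.1 hP
      have hk : Complex.I ^ (k : ℕ) ≠ 0 := pow_ne_zero _ Complex.I_ne_zero
      have ht : pauliString t *ᵥ x = (Complex.I ^ (k : ℕ))⁻¹ • x := by
        rw [smul_mulVec] at hPx
        rw [eq_inv_smul_iff₀ hk, hPx]
      exact ⟨t, by simpa [A] using ⟨_, ht⟩, by rw [hf ht, inv_inv]⟩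
    · rintro ⟨t, ht, rfl⟩
      obtain ⟨c, hc⟩ : ∃ c : ℂ, pauliString t *ᵥ x = c • x := by simpa [A] using ht
      rw [hf hc]
      exact ((isPauli_pauliString t).inv_smul_mem_stabGroup hx hc).2
  have hinj : Set.InjOn f A := by
    intro s hs t _ hst
    obtain ⟨c, hc⟩ : ∃ c : ℂ, pauliString s *ᵥ x = c • x := by simpa [A] using hs
    rw [hf hc] at hst
    exact pauliString_eq_of_smul_eq
      (inv_ne_zero ((isPauli_pauliString s).inv_smul_mem_stabGroup hx hc).1) hst
  rw [himage, hinj.ncard_image, Set.ncard_coe_finset]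

/-- A nonzero vector has a maximal stabilizer group exactly when all Paulis obey the dichotomy. -/
lemma ncard_stabGroup_eq_iff {x : QVec n} (hx : x ≠ 0) :
    (stabGroup x).ncard = 2 ^ n ↔ PauliDichotomy x := by
  classical
  rw [ncard_stabGroup hx]
  set A := Finset.univ.filter fun t : Fin n → Fin 4 => ∃ c : ℂ, pauliString t *ᵥ x = c • x
  have hN := nrmSq_pos hx
  have htotal : ∑ t : Fin n → Fin 4, Complex.normSq (star x ⬝ᵥ pauliString t *ᵥ x)
      = 2 ^ n * nrmSq x ^ 2 := by
    have h := sum_expectation_mul_star x x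
    simp only [star_dotProduct_self, Complex.star_def, Complex.mul_conj] at h
    rw [sq]
    exact_mod_cast h
  have hmem {t : Fin n → Fin 4} (ht : t ∈ A) :
      Complex.normSq (star x ⬝ᵥ pauliString t *ᵥ x) = nrmSq x ^ 2 := by
    obtain ⟨c, hc⟩ : ∃ c : ℂ, pauliString t *ᵥ x = c • x := by simpa [A] using ht
    rw [hc, dotProduct_smul, smul_eq_mul, star_dotProduct_self, Complex.normSq_mul]
    rcases sq_eq_one_iff.1 (pauliString_eigenvalue_sq t hx hc) with rfl | rfl <;>
      simp [Complex.normSq_ofReal, sq]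
  have hsplit : (A.card : ℝ) * nrmSq x ^ 2
      + ∑ t ∈ Aᶜ, Complex.normSq (star x ⬝ᵥ pauliString t *ᵥ x) = 2 ^ n * nrmSq x ^ 2 := by
    rw [← htotal, ← Finset.sum_add_sum_compl A, Finset.sum_congr rfl fun t ht => hmem ht]
    simp
  have hN2 : nrmSq x ^ 2 ≠ 0 := by positivity
  constructor
  · intro hcard P hP
    rw [hcard, Nat.cast_pow, Nat.cast_ofNat, add_eq_left,
      Finset.sum_eq_zero_iff_of_nonneg fun _ _ => Complex.normSq_nonneg _] at hsplit
    obtain ⟨k, t, rfl⟩ := isPauli_iff.1 hP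
    by_cases ht : t ∈ A
    · obtain ⟨c, hc⟩ : ∃ c : ℂ, pauliString t *ᵥ x = c • x := by simpa [A] using ht
      exact Or.inr ⟨Complex.I ^ (k : ℕ) * c, by rw [smul_mulVec, hc, smul_smul]⟩
    · left
      rw [smul_mulVec, dotProduct_smul,
        Complex.normSq_eq_zero.1 (hsplit t (Finset.mem_compl.2 ht)), smul_zero]
  · intro h
    rw [Finset.sum_eq_zero, add_zero] at hsplit
    · exact_mod_cast mul_right_cancel₀ hN2 hsplit
    · intro t ht
      have ht : ¬ ∃ c : ℂ, pauliString t *ᵥ x = c • x := by simpa [A] using ht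
      rw [((h _ (isPauli_pauliString t)).resolve_right ht), Complex.normSq_zero]

lemma isStabState_normalize_iff {x : QVec n} (hx : x ≠ 0) :
    IsStabState ((Real.sqrt (nrmSq x))⁻¹ • x) ↔ PauliDichotomy x := by
  have hN := nrmSq_pos hx
  have hr : (Real.sqrt (nrmSq x))⁻¹ ≠ 0 := by positivity
  have hnorm : nrmSq ((Real.sqrt (nrmSq x))⁻¹ • x) = 1 := by
    have h : nrmSq ((Real.sqrt (nrmSq x))⁻¹ • x) = ((Real.sqrt (nrmSq x))⁻¹) ^ 2 * nrmSq x := by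
      simp only [nrmSq, Finset.mul_sum, Pi.smul_apply, Complex.real_smul, Complex.normSq_mul,
        Complex.normSq_ofReal, sq]
    rw [h, inv_pow, Real.sq_sqrt hN.le, inv_mul_cancel₀ hN.ne']
  have hstab : stabGroup ((Real.sqrt (nrmSq x))⁻¹ • x) = stabGroup x := by
    ext P
    simp only [stabGroup, Set.mem_ofPred_eq, mulVec_smul, smul_right_inj hr]
  rw [IsStabState, hnorm, hstab, ncard_stabGroup_eq_iff hx]
  simp

lemma IsStabState.ne_zero {x : QVec n} (h : IsStabState x) : x ≠ 0 := by
  rintro rfl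
  simpa [nrmSq] using h.1

/-- A Pauli commuting with the whole stabilizer group of a stabilizer state `x` has `x` as an
eigenvector. -/
lemma exists_eigenvalue_of_commute {x : QVec n} (hx : IsStabState x) {W : QMat n} (hW : IsPauli W)
    (hcomm : ∀ P ∈ stabGroup x, P * W = W * P) : ∃ c : ℂ, W *ᵥ x = c • x := by
  have hx0 := hx.ne_zero
  have hdich := (ncard_stabGroup_eq_iff hx0).1 hx.2
  refine (hdich W hW).resolve_left fun hzero => ?_
  have hexp (t : Fin n → Fin 4) :
      (star x ⬝ᵥ pauliString t *ᵥ x) * star (star (W *ᵥ x) ⬝ᵥ pauliString t *ᵥ (W *ᵥ x))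
        = (star x ⬝ᵥ pauliString t *ᵥ x) * star (star x ⬝ᵥ pauliString t *ᵥ x) := by
    rcases hdich _ (isPauli_pauliString t) with h | ⟨c, h⟩
    · rw [h, zero_mul, zero_mul]
    · obtain ⟨hc, hmem⟩ := (isPauli_pauliString t).inv_smul_mem_stabGroup hx0 h
      have hcm := hcomm _ hmem
      rw [smul_mul_assoc, mul_smul_comm] at hcm
      rw [mulVec_mulVec, smul_right_injective _ (inv_ne_zero hc) hcm, ← mulVec_mulVec,
        hW.dotProduct_mulVec_mulVec]
  have h := sum_expectation_mul_star x (W *ᵥ x)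
  rw [Finset.sum_congr rfl fun t _ => hexp t, sum_expectation_mul_star, hzero, zero_mul, mul_zero]
    at h
  simp [star_dotProduct_self_ne_zero hx0] at h

lemma mul_comm_of_mem_stabGroup {x : QVec n} (hx : x ≠ 0) {P R : QMat n} (hP : P ∈ stabGroup x)
    (hR : R ∈ stabGroup x) : P * R = R * P := by
  refine (hP.1.commute_or_anticommute hR.1).resolve_right fun h => hx ?_
  have h2 := congrArg (· *ᵥ x) h
  simp only [neg_mulVec, ← mulVec_mulVec, hP.2, hR.2] at h2
  exact self_eq_neg.1 h2

lemma mul_self_of_mem_stabGroup {x : QVec n} (hx : x ≠ 0) {P : QMat n} (hP : P ∈ stabGroup x) :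
    P * P = 1 := by
  refine hP.1.mul_self.resolve_right fun h => hx ?_
  have h2 := congrArg (· *ᵥ x) h
  simp only [neg_mulVec, ← mulVec_mulVec, hP.2, one_mulVec] at h2
  exact self_eq_neg.1 h2

/-- No vector obeying the Pauli dichotomy has a Pauli expectation whose square is `1 / 2`. -/
lemma PauliDichotomy.false_of_expectation {x : QVec n} (h : PauliDichotomy x) (hx : x ≠ 0)
    {P : QMat n} (hP : IsPauli P) {κ : ℂ} (hκ : κ ^ 2 = 1 / 2)
    (hexp : star x ⬝ᵥ P *ᵥ x = κ * (star x ⬝ᵥ x)) : False := by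
  have hN := star_dotProduct_self_ne_zero hx
  rcases h P hP with h | ⟨c, h⟩
  · rw [h, eq_comm, mul_eq_zero, or_iff_left hN] at hexp
    rw [hexp] at hκ
    norm_num at hκ
  · have hc := hP.eigenvalue_sq hx h
    rw [h, dotProduct_smul, smul_eq_mul] at hexp
    rw [mul_right_cancel₀ hN hexp, hκ] at hc
    norm_num at hc

lemma opAt_apply (j : Fin n) (m : Matrix (Fin 2) (Fin 2) ℂ) (v w : Fin n → Fin 2) :
    opAt j m v w = m (v j) (w j) * ∏ i ∈ Finset.univ.erase j, σI (v i) (w i) := by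
  rw [opAt, kron, ← Finset.mul_prod_erase _ _ (Finset.mem_univ j), if_pos rfl]
  congr 1
  exact Finset.prod_congr rfl fun i hi => by rw [if_neg (Finset.ne_of_mem_erase hi)]

lemma opAt_smul_add_smul (j : Fin n) (a b : ℂ) (A B : Matrix (Fin 2) (Fin 2) ℂ) :
    opAt j (a • A + b • B) = a • opAt j A + b • opAt j B := by
  ext v w
  simp only [opAt_apply, Matrix.add_apply, Matrix.smul_apply, smul_eq_mul]
  ring

lemma opAt_σI (j : Fin n) : opAt j σI = 1 := by
  simp only [opAt, ite_self]
  exact kron_one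

lemma isPauli_opAt_σZ (j : Fin n) : IsPauli (opAt j σZ) :=
  ⟨0, fun i => if i = j then σZ else σI,
    fun i => by by_cases h : i = j <;> simp [h, IsPauliFactor], by simp [opAt]⟩

lemma opAt_σZ_mul_self (j : Fin n) : opAt j σZ * opAt j σZ = 1 := by
  rw [opAt, kron_mul, ← kron_one]
  congr 1
  ext1 i
  by_cases h : i = j <;> simp [h, σZ, σI, one_fin_two]

/-- The phase `e^{iπ/4}` of the `T` gate. -/
def tPhase : ℂ := Complex.exp (Real.pi * Complex.I / 4)

lemma tPhase_sq : tPhase ^ 2 = Complex.I := by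
  rw [tPhase, ← Complex.exp_nat_mul]
  refine Eq.trans ?_ Complex.exp_pi_div_two_mul_I
  congr 1
  push_cast
  ring

lemma star_tPhase_mul : star tPhase * tPhase = 1 := by
  rw [tPhase, Complex.star_def, ← Complex.exp_conj, ← Complex.exp_add, ← Complex.exp_zero]
  congr 1
  simp only [map_div₀, map_mul, Complex.conj_ofReal, Complex.conj_I, map_ofNat]
  ring

lemma opAt_Tgate (j : Fin n) :
    opAt j Tgate = ((1 + tPhase) / 2) • (1 : QMat n) + ((1 - tPhase) / 2) • opAt j σZ := by
  rw [← opAt_σI j, ← opAt_smul_add_smul]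
  congr 1
  ext a b
  fin_cases a <;> fin_cases b <;> simp [Tgate, σI, σZ, tPhase] <;> ring

/-- The stabilizer group of `ψ` is generated by `s` and the subgroup `G`, and the Pauli involution
`Z` commutes with `G` and anticommutes with `s`. -/
structure LogicalFrame (ψ : QVec n) (s Z : QMat n) (G : Submonoid (QMat n)) : Prop where
  isStabState : IsStabState ψ
  s_mem : s ∈ stabGroup ψ
  G_mem : ∀ Q ∈ G, Q ∈ stabGroup ψ
  exists_eq : ∀ P ∈ stabGroup ψ, ∃ Q ∈ G, P = Q ∨ P = s * Q
  isPauli_Z : IsPauli Z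
  Z_mul_self : Z * Z = 1
  Z_mul_s : Z * s = -(s * Z)
  Z_mul_G : ∀ Q ∈ G, Z * Q = Q * Z

namespace LogicalFrame

variable {ψ : QVec n} {s Z : QMat n} {G : Submonoid (QMat n)}

lemma s_mul_self (F : LogicalFrame ψ s Z G) : s * s = 1 :=
  mul_self_of_mem_stabGroup F.isStabState.ne_zero F.s_mem

lemma G_mul_self (F : LogicalFrame ψ s Z G) {Q : QMat n} (hQ : Q ∈ G) : Q * Q = 1 :=
  mul_self_of_mem_stabGroup F.isStabState.ne_zero (F.G_mem Q hQ)

lemma s_mul_G (F : LogicalFrame ψ s Z G) {Q : QMat n} (hQ : Q ∈ G) : s * Q = Q * s :=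
  mul_comm_of_mem_stabGroup F.isStabState.ne_zero F.s_mem (F.G_mem Q hQ)

lemma G_mul_G (F : LogicalFrame ψ s Z G) {Q R : QMat n} (hQ : Q ∈ G) (hR : R ∈ G) : Q * R = R * Q :=
  mul_comm_of_mem_stabGroup F.isStabState.ne_zero (F.G_mem Q hQ) (F.G_mem R hR)

lemma exists_smul_of_commute (F : LogicalFrame ψ s Z G) {W : QMat n} (hW : IsPauli W)
    (hWs : W * s = s * W)
    (hWG : ∀ Q ∈ G, W * Q = Q * W) :
    ∃ (c : ℂ) (Q : QMat n), Q ∈ G ∧ (W = c • Q ∨ W = c • (s * Q)) := by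
  obtain ⟨c, hc⟩ := exists_eigenvalue_of_commute F.isStabState hW fun P hP => by
    obtain ⟨Q, hQ, rfl | rfl⟩ := F.exists_eq P hP
    · exact (hWG _ hQ).symm
    · rw [mul_assoc, ← hWG Q hQ, ← mul_assoc, ← hWs, mul_assoc]
  obtain ⟨hc0, hmem⟩ := hW.inv_smul_mem_stabGroup F.isStabState.ne_zero hc
  obtain ⟨Q, hQ, h⟩ := F.exists_eq _ hmem
  exact ⟨c, Q, hQ, by simpa only [inv_smul_eq_iff₀ hc0] using h⟩

/-- A Pauli commuting with `G` is, up to phase and an element of `G`, a logical Pauli. -/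
lemma exists_eq_smul_mul (F : LogicalFrame ψ s Z G) {P : QMat n} (hP : IsPauli P)
    (hPG : ∀ Q ∈ G, P * Q = Q * P) :
    ∃ (c : ℂ) (L Q : QMat n), Q ∈ G ∧ (L = 1 ∨ L = Z ∨ L = s ∨ L = s * Z) ∧ P = c • (L * Q) := by
  rcases hP.commute_or_anticommute F.s_mem.1 with hPs | hPs
  · obtain ⟨c, Q, hQ, h | h⟩ := F.exists_smul_of_commute hP hPs hPG
    · exact ⟨c, 1, Q, hQ, by simp, by rw [h, one_mul]⟩
    · exact ⟨c, s, Q, hQ, by simp, h⟩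
  · have hP' : P = Z * (Z * P) := by rw [← mul_assoc, F.Z_mul_self, one_mul]
    obtain ⟨c, Q, hQ, h | h⟩ := F.exists_smul_of_commute (F.isPauli_Z.mul hP)
      (by rw [mul_assoc, hPs, mul_neg, ← mul_assoc, F.Z_mul_s, neg_mul, neg_neg, mul_assoc])
      (fun Q hQ => by rw [mul_assoc, hPG Q hQ, ← mul_assoc, F.Z_mul_G Q hQ, mul_assoc])
    · exact ⟨c, Z, Q, hQ, by simp, by rw [hP', h, mul_smul_comm]⟩
    · exact ⟨-c, s * Z, Q, hQ, by simp, by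
        rw [hP', h, mul_smul_comm, ← mul_assoc, F.Z_mul_s, neg_mul, smul_neg, neg_smul]⟩

lemma logical_mul_G (F : LogicalFrame ψ s Z G) {L Q : QMat n} (hL : L = Z ∨ L = s ∨ L = s * Z)
    (hQ : Q ∈ G) :
    L * Q = Q * L := by
  rcases hL with rfl | rfl | rfl
  · exact F.Z_mul_G Q hQ
  · exact F.s_mul_G hQ
  · rw [mul_assoc, F.Z_mul_G Q hQ, ← mul_assoc, F.s_mul_G hQ, mul_assoc]

lemma logical_anticommute (F : LogicalFrame ψ s Z G) {L L' : QMat n}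
    (hL : L = Z ∨ L = s ∨ L = s * Z)
    (hL' : L' = Z ∨ L' = s ∨ L' = s * Z) (hne : L ≠ L') : L * L' = -(L' * L) := by
  have hZs := F.Z_mul_s
  have h1 : Z * (s * Z) = -(s * Z * Z) := by rw [← mul_assoc, hZs, neg_mul]
  have h2 : s * Z * s = -(s * (s * Z)) := by rw [mul_assoc, hZs, mul_neg]
  rcases hL with rfl | rfl | rfl <;> rcases hL' with rfl | rfl | rfl
  · exact absurd rfl hne
  · exact hZs
  · exact h1
  · rw [hZs, neg_neg]
  · exact absurd rfl hne
  · rw [h2, neg_neg]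
  · rw [h1, neg_neg]
  · exact h2
  · exact absurd rfl hne

lemma smul_logical_anticommute (F : LogicalFrame ψ s Z G) {L L' Q Q' : QMat n}
    (hL : L = Z ∨ L = s ∨ L = s * Z)
    (hL' : L' = Z ∨ L' = s ∨ L' = s * Z) (hne : L ≠ L') (hQ : Q ∈ G) (hQ' : Q' ∈ G) (c c' : ℂ) :
    (c • (L * Q)) * (c' • (L' * Q')) = -((c' • (L' * Q')) * (c • (L * Q))) := by
  have h : L * Q * (L' * Q') = -(L' * Q' * (L * Q)) := by
    calc L * Q * (L' * Q') = L * (Q * L') * Q' := by simp only [mul_assoc]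
      _ = L * L' * (Q * Q') := by rw [← F.logical_mul_G hL' hQ]; simp only [mul_assoc]
      _ = -(L' * (L * Q') * Q) := by
        rw [F.logical_anticommute hL hL' hne, F.G_mul_G hQ hQ']; simp only [mul_assoc, neg_mul]
      _ = _ := by rw [F.logical_mul_G hL hQ']; simp only [mul_assoc]
  rw [smul_mul_smul_comm, smul_mul_smul_comm, h, smul_neg, mul_comm c]

/-- The projection of a `G`-invariant vector onto an eigenspace of a logical Pauli obeys the
dichotomy. -/
lemma pauliDichotomy_of_logical (F : LogicalFrame ψ s Z G) {L Q M : QMat n}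
    (hL : L = Z ∨ L = s ∨ L = s * Z) (hQ : Q ∈ G)
    {c m : ℂ} (hM : IsPauli M) (hML : M = c • (L * Q)) (hm : m = 1 ∨ m = -1) {v : QVec n}
    (hGv : ∀ R ∈ G, R *ᵥ v = v) (hMv : M *ᵥ v = m • v) : PauliDichotomy v := by
  intro P hP
  have hm2 : m * m = 1 := by rcases hm with rfl | rfl <;> norm_num
  by_cases hPM : P * M = -(M * P)
  · left
    refine expectation_eq_zero_of_anticommute (R := m • M)
      (hM.smul (by rw [show m ^ 4 = (m * m) ^ 2 by ring, hm2, one_pow])) ?_ ?_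
    · rw [smul_mulVec, hMv, smul_smul, hm2, one_smul]
    · rw [mul_smul_comm, hPM, smul_mul_assoc, smul_neg]
  by_cases hPG : ∀ R ∈ G, P * R = R * P
  · right
    obtain ⟨c', L', Q', hQ', rfl | hL', hPL⟩ := F.exists_eq_smul_mul hP hPG
    · exact ⟨c', by rw [hPL, one_mul, smul_mulVec, hGv Q' hQ']⟩
    · have hLL' : L' = L := by
        by_contra hne
        apply hPM
        rw [hPL, hML]
        exact F.smul_logical_anticommute hL' hL hne hQ' hQ c' c
      subst hLL'
      have hc : c ≠ 0 := by
        rintro rfl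
        have h1 := hM.conjTranspose_mul_self
        rw [hML, zero_smul, mul_zero] at h1
        exact zero_ne_one h1
      have hLv : L' *ᵥ v = (c⁻¹ * m) • v := by
        rw [hML, smul_mulVec, ← mulVec_mulVec, hGv Q hQ] at hMv
        rw [mul_smul, ← hMv, smul_smul, inv_mul_cancel₀ hc, one_smul]
      exact ⟨c' * (c⁻¹ * m), by
        rw [hPL, smul_mulVec, ← mulVec_mulVec, hGv Q' hQ', hLv, smul_smul]⟩
  · left
    push Not at hPG
    obtain ⟨R, hR, hne⟩ := hPG
    have hRP := F.G_mem R hR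
    exact expectation_eq_zero_of_anticommute hRP.1 (hGv R hR)
      ((hP.commute_or_anticommute hRP.1).resolve_left hne)

lemma mulVec_eq_of_mem {Q : QMat n} (F : LogicalFrame ψ s Z G) (hQ : Q ∈ G) (a b : ℂ) :
    Q *ᵥ (a • ψ + b • Z *ᵥ ψ) = a • ψ + b • Z *ᵥ ψ := by
  have h := (F.G_mem Q hQ).2
  rw [mulVec_add, mulVec_smul, mulVec_smul, h, mulVec_mulVec, ← F.Z_mul_G Q hQ, ← mulVec_mulVec, h]

lemma s_mulVec (F : LogicalFrame ψ s Z G) (a b : ℂ) :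
    s *ᵥ (a • ψ + b • Z *ᵥ ψ) = a • ψ + (-b) • Z *ᵥ ψ := by
  have hsZ : s * Z = -(Z * s) := by rw [F.Z_mul_s, neg_neg]
  rw [mulVec_add, mulVec_smul, mulVec_smul, F.s_mem.2, mulVec_mulVec, hsZ, neg_mulVec,
    ← mulVec_mulVec, F.s_mem.2, smul_neg, neg_smul]

lemma dotProduct_logical (F : LogicalFrame ψ s Z G) (a b a' b' : ℂ) :
    star (a • ψ + b • Z *ᵥ ψ) ⬝ᵥ (a' • ψ + b' • Z *ᵥ ψ) = star a * a' + star b * b' := by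
  have hψ : star ψ ⬝ᵥ ψ = 1 := by rw [star_dotProduct_self, F.isStabState.1, Complex.ofReal_one]
  have hZ : star ψ ⬝ᵥ Z *ᵥ ψ = 0 :=
    expectation_eq_zero_of_anticommute F.s_mem.1 F.s_mem.2 F.Z_mul_s
  have hZ' : star (Z *ᵥ ψ) ⬝ᵥ ψ = 0 := by
    rw [star_dotProduct, hZ, star_zero]
  have hZZ := F.isPauli_Z.dotProduct_mulVec_mulVec ψ ψ
  simp only [star_add, star_smul, add_dotProduct, dotProduct_add, smul_dotProduct, dotProduct_smul,
    hψ, hZ, hZ', hZZ, smul_eq_mul]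
  ring

end LogicalFrame

lemma expectation_projection {M P : QMat n} (hM : IsPauli M) (hMH : M.IsHermitian) {m : ℂ}
    (hm : m = 1 ∨ m = -1) {x : QVec n} (hPM : P * M = M * P) (hx : star x ⬝ᵥ (P * M) *ᵥ x = 0) :
    star (((2 : ℂ)⁻¹ • ((1 : QMat n) + m • M)) *ᵥ x) ⬝ᵥ
        P *ᵥ (((2 : ℂ)⁻¹ • ((1 : QMat n) + m • M)) *ᵥ x)
      = (2 : ℂ)⁻¹ * (star x ⬝ᵥ P *ᵥ x) := by
  have h1 : star x ⬝ᵥ P *ᵥ M *ᵥ x = 0 := by rw [mulVec_mulVec, hx]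
  have h2 : star (M *ᵥ x) ⬝ᵥ P *ᵥ x = 0 := by
    rw [star_mulVec, ← dotProduct_mulVec, hMH.eq, mulVec_mulVec, ← hPM, hx]
  have h3 : star (M *ᵥ x) ⬝ᵥ P *ᵥ M *ᵥ x = star x ⬝ᵥ P *ᵥ x := by
    rw [mulVec_mulVec, hPM, ← mulVec_mulVec, hM.dotProduct_mulVec_mulVec]
  have hm2 : star m * m = 1 := by rcases hm with rfl | rfl <;> simp
  simp only [smul_mulVec, add_mulVec, one_mulVec, mulVec_smul, mulVec_add, star_smul, star_add,
    smul_dotProduct, dotProduct_smul, add_dotProduct, dotProduct_add, h1, h2, h3, smul_eq_mul,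
    star_inv₀, star_ofNat]
  linear_combination (2 : ℂ)⁻¹ * 2⁻¹ * (star x ⬝ᵥ P *ᵥ x) * hm2

/-- If projecting the magic state `x` by `M` gives a vector obeying the dichotomy, then `M` is a
nontrivial logical Pauli up to phase. -/
lemma LogicalFrame.exists_logical {ψ : QVec n} {s Z : QMat n} {G : Submonoid (QMat n)}
    (F : LogicalFrame ψ s Z G) {M : QMat n} (hM : IsPauli M) (hMH : M.IsHermitian) {m : ℂ}
    (hm : m = 1 ∨ m = -1) {x : QVec n} (hGx : ∀ R ∈ G, R *ᵥ x = x) {κ : ℂ} (hκ : κ ^ 2 = 1 / 2)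
    (hsx : star x ⬝ᵥ s *ᵥ x = κ * (star x ⬝ᵥ x))
    (hne : ((2 : ℂ)⁻¹ • ((1 : QMat n) + m • M)) *ᵥ x ≠ 0)
    (hdich : PauliDichotomy (((2 : ℂ)⁻¹ • ((1 : QMat n) + m • M)) *ᵥ x)) :
    ∃ (c : ℂ) (L Q : QMat n), Q ∈ G ∧ (L = Z ∨ L = s ∨ L = s * Z) ∧ M = c • (L * Q) := by
  by_cases hMG : ∀ Q ∈ G, M * Q = Q * M
  · obtain ⟨c, L, Q, hQ, rfl | hL, hML⟩ := F.exists_eq_smul_mul hM hMG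
    · refine (hdich.false_of_expectation hne F.s_mem.1 hκ ?_).elim
      have hv : ((2 : ℂ)⁻¹ • ((1 : QMat n) + m • M)) *ᵥ x = ((2 : ℂ)⁻¹ * (1 + m * c)) • x := by
        rw [hML, one_mul, smul_smul, smul_mulVec, add_mulVec, one_mulVec, smul_mulVec, hGx Q hQ]
        module
      rw [hv, mulVec_smul, star_smul, smul_dotProduct, smul_dotProduct, dotProduct_smul,
        dotProduct_smul, hsx]
      simp only [smul_eq_mul]
      ring
    · exact ⟨c, L, Q, hQ, hL, hML⟩
  · push Not at hMG
    obtain ⟨Q, hQ, hMQ⟩ := hMG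
    have hQP := F.G_mem Q hQ
    replace hMQ := (hM.commute_or_anticommute hQP.1).resolve_left hMQ
    obtain ⟨P, hP, hPM, hPQ, hPx⟩ : ∃ P : QMat n, IsPauli P ∧ P * M = M * P ∧ P * Q = Q * P ∧
        P *ᵥ x = s *ᵥ x := by
      rcases F.s_mem.1.commute_or_anticommute hM with h | h
      · exact ⟨s, F.s_mem.1, h, F.s_mul_G hQ, rfl⟩
      · refine ⟨s * Q, F.s_mem.1.mul hQP.1, ?_, ?_, ?_⟩
        · rw [mul_assoc, show Q * M = -(M * Q) by rw [hMQ, neg_neg], mul_neg, ← mul_assoc, h,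
            neg_mul, neg_neg, mul_assoc]
        · rw [← mul_assoc, ← F.s_mul_G hQ]
        · rw [← mulVec_mulVec, hGx Q hQ]
    have hzero {R : QMat n} (hRQ : R * Q = Q * R) : star x ⬝ᵥ (R * M) *ᵥ x = 0 := by
      refine expectation_eq_zero_of_anticommute hQP.1 (hGx Q hQ) ?_
      rw [mul_assoc, hMQ, mul_neg, ← mul_assoc, hRQ, mul_assoc]
    have hnorm := expectation_projection (P := 1) hM hMH hm (by simp) (hzero (by simp))
    simp only [one_mulVec] at hnorm
    refine (hdich.false_of_expectation hne hP hκ ?_).elim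
    rw [expectation_projection hM hMH hm hPM (hzero hPQ), hnorm, hPx, hsx]
    ring

lemma isPauli_one : IsPauli (1 : QMat n) :=
  ⟨0, fun _ => σI, fun _ => Or.inl rfl, by rw [← kron_one]; simp [σI]⟩

lemma closure_subset_stabGroup {x : QVec n} {S : Set (QMat n)} (hS : S ⊆ stabGroup x) {Q : QMat n}
    (hQ : Q ∈ Submonoid.closure S) : Q ∈ stabGroup x := by
  induction hQ using Submonoid.closure_induction with
  | mem P hP => exact hS hP
  | one => exact ⟨isPauli_one, one_mulVec x⟩
  | mul P R _ _ hP hR => exact ⟨hP.1.mul hR.1, by rw [← mulVec_mulVec, hR.2, hP.2]⟩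

lemma exists_prodPow_eq [NeZero n] (g : Fin n → QMat n) (α : Fin n → ZMod 2) :
    ∃ Q ∈ Submonoid.closure {Q : QMat n | ∃ i : Fin n, i ≠ 0 ∧ Q = g i},
      prodPow g α = Q ∨ prodPow g α = g 0 * Q := by
  suffices h : ∀ {k : ℕ} [NeZero k] (g : Fin k → QMat n) (α : Fin k → ZMod 2),
      ∃ Q ∈ Submonoid.closure {Q : QMat n | ∃ i : Fin k, i ≠ 0 ∧ Q = g i},
        prodPow g α = Q ∨ prodPow g α = g 0 * Q from h g α
  intro k _ g α
  obtain ⟨k, rfl⟩ := Nat.exists_eq_succ_of_ne_zero (NeZero.ne k)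
  refine ⟨(List.ofFn fun i : Fin k => g i.succ ^ (α i.succ).val).prod, ?_, ?_⟩
  · refine Submonoid.list_prod_mem _ fun P hP => ?_
    obtain ⟨i, rfl⟩ := (List.mem_ofFn' _ _).1 hP
    have hi : g i.succ ∈ {Q : QMat n | ∃ i : Fin (k + 1), i ≠ 0 ∧ Q = g i} :=
      ⟨i.succ, Fin.succ_ne_zero i, rfl⟩
    exact Submonoid.pow_mem _ (Submonoid.subset_closure hi) _
  · rw [prodPow, List.ofFn_succ, List.prod_cons]
    have h2 : (α 0).val < 2 := ZMod.val_lt (α 0)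
    interval_cases (α 0).val
    · exact Or.inl (by rw [pow_zero, one_mul])
    · exact Or.inr (by rw [pow_one])

lemma logicalFrame_of_isIndepGenSet [NeZero n] {ψ : QVec n} (hψ : IsStabState ψ)
    {g : Fin n → QMat n} (hg : IsIndepGenSet ψ g)
    (hanti : opAt (0 : Fin n) σZ * g 0 = -(g 0 * opAt (0 : Fin n) σZ))
    (hcomm : ∀ i : Fin n, i ≠ 0 → opAt (0 : Fin n) σZ * g i = g i * opAt (0 : Fin n) σZ) :
    LogicalFrame ψ (g 0) (opAt (0 : Fin n) σZ)
      (Submonoid.closure {Q : QMat n | ∃ i : Fin n, i ≠ 0 ∧ Q = g i}) where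
  isStabState := hψ
  s_mem := hg.1 0
  G_mem Q hQ := closure_subset_stabGroup (by rintro _ ⟨i, -, rfl⟩; exact hg.1 i) hQ
  exists_eq P hP := by
    rw [← hg.2.2] at hP
    obtain ⟨α, rfl⟩ := hP
    exact exists_prodPow_eq g α
  isPauli_Z := isPauli_opAt_σZ 0
  Z_mul_self := opAt_σZ_mul_self 0
  Z_mul_s := hanti
  Z_mul_G Q hQ := by
    induction hQ using Submonoid.closure_induction with
    | mem P hP =>
      obtain ⟨i, hi, rfl⟩ := hP
      exact hcomm i hi
    | one => rw [mul_one, one_mul]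
    | mul P R _ _ hP hR => rw [← mul_assoc, hP, mul_assoc, hR, mul_assoc]

end PauliGroup

/-- **Stabilizer purification criterion for a single `T` gate** (Sec. V A,
App. B 2): with `ψ` a stabilizer state with independent generating set
`s_1 = g 0, g_2, …, g_n` (where `Z_1` anticommutes with `s_1` and commutes with
the `g_i`, `i ≥ 2`), `𝒢 = ⟨g_2,…,g_n⟩`, and `φ = T_1 ψ`, a Hermitian Pauli
measurement `M` with outcome `m = ±1` and projector `Π = (I + mM)/2`, `Πφ ≠ 0`,
yields a stabilizer post-measurement state `Πφ/‖Πφ‖` if and only if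
`M ∈ ±Z_1𝒢 ∪ ±s_1𝒢 ∪ ±i s_1Z_1𝒢`. -/
theorem stabilizer_purification_iff_logical_measurement {n : ℕ} [NeZero n]
    (ψ : QVec n) (hψ : IsStabState ψ)
    (g : Fin n → QMat n) (hg : IsIndepGenSet ψ g)
    (hanti : opAt (0 : Fin n) σZ * g 0 = -(g 0 * opAt (0 : Fin n) σZ))
    (hcomm : ∀ i : Fin n, i ≠ 0 →
      opAt (0 : Fin n) σZ * g i = g i * opAt (0 : Fin n) σZ)
    (M : QMat n) (hMP : IsPauli M) (hMH : M.IsHermitian)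
    (m : ℂ) (hm : m = 1 ∨ m = -1)
    (hne : ((2 : ℂ)⁻¹ • ((1 : QMat n) + m • M)).mulVec
        ((opAt (0 : Fin n) Tgate).mulVec ψ) ≠ 0) :
    IsStabState
        ((Real.sqrt (nrmSq (((2 : ℂ)⁻¹ • ((1 : QMat n) + m • M)).mulVec
            ((opAt (0 : Fin n) Tgate).mulVec ψ))))⁻¹ •
          ((2 : ℂ)⁻¹ • ((1 : QMat n) + m • M)).mulVec
            ((opAt (0 : Fin n) Tgate).mulVec ψ))
      ↔ ∃ Q ∈ Submonoid.closure {Q : QMat n | ∃ i : Fin n, i ≠ 0 ∧ Q = g i},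
          M = opAt (0 : Fin n) σZ * Q ∨ M = -(opAt (0 : Fin n) σZ * Q) ∨
          M = g 0 * Q ∨ M = -(g 0 * Q) ∨
          M = Complex.I • (g 0 * (opAt (0 : Fin n) σZ * Q)) ∨
          M = -(Complex.I • (g 0 * (opAt (0 : Fin n) σZ * Q))) := by
  have F := logicalFrame_of_isIndepGenSet hψ hg hanti hcomm
  set G := Submonoid.closure {Q : QMat n | ∃ i : Fin n, i ≠ 0 ∧ Q = g i}
  set Z := opAt (0 : Fin n) σZ
  have hφ : opAt (0 : Fin n) Tgate *ᵥ ψ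
      = ((1 + tPhase) / 2) • ψ + ((1 - tPhase) / 2) • Z *ᵥ ψ := by
    rw [opAt_Tgate, add_mulVec, smul_mulVec, smul_mulVec, one_mulVec]
  have hGφ : ∀ R ∈ G, R *ᵥ opAt (0 : Fin n) Tgate *ᵥ ψ = opAt (0 : Fin n) Tgate *ᵥ ψ := by
    intro R hR
    rw [hφ, F.mulVec_eq_of_mem hR]
  have hMM : M * M = 1 := by
    simpa only [hMH.eq] using hMP.conjTranspose_mul_self
  rw [isStabState_normalize_iff hne]
  constructor
  · intro hdich
    have hstar : star tPhase ^ 2 = -Complex.I := by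
      rw [← star_pow, tPhase_sq, Complex.star_def, Complex.conj_I]
    obtain ⟨c, L, Q, hQ, hL, hML⟩ := F.exists_logical hMP hMH hm hGφ
      (κ := (star tPhase + tPhase) / 2)
      (by linear_combination (1 / 4 : ℂ) * hstar + (1 / 4 : ℂ) * tPhase_sq
            + (1 / 2 : ℂ) * star_tPhase_mul)
      (by
        rw [hφ, F.s_mulVec, F.dotProduct_logical, F.dotProduct_logical]
        simp only [star_div₀, star_add, star_sub, star_one, star_ofNat]
        linear_combination (-(star tPhase + tPhase) / 4 : ℂ) * star_tPhase_mul)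
      hne hdich
    have hsq : c ^ 2 • (L * L) = (1 : QMat n) := by
      rw [← hMM, hML, smul_mul_smul_comm, ← sq c, F.logical_mul_G hL hQ, mul_assoc, ← mul_assoc L,
        F.logical_mul_G hL hQ, mul_assoc, ← mul_assoc Q, F.G_mul_self hQ, one_mul]
    refine ⟨Q, hQ, ?_⟩
    have hone {d : ℂ} (h : d • (1 : QMat n) = 1) : d = 1 :=
      smul_left_injective ℂ one_ne_zero (by simpa using h)
    rcases hL with rfl | rfl | rfl
    · rw [F.Z_mul_self] at hsq
      rcases sq_eq_one_iff.1 (hone hsq) with rfl | rfl <;> simp [hML]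
    · rw [F.s_mul_self] at hsq
      rcases sq_eq_one_iff.1 (hone hsq) with rfl | rfl <;> simp [hML]
    · have hLL : g 0 * Z * (g 0 * Z) = -1 := by
        rw [mul_assoc, ← mul_assoc Z, F.Z_mul_s, neg_mul, mul_neg, mul_assoc, F.Z_mul_self,
          mul_one, F.s_mul_self]
      rw [hLL, smul_neg, ← neg_smul] at hsq
      have hc : c ^ 2 = Complex.I ^ 2 := by
        rw [Complex.I_sq, ← hone hsq, neg_neg]
      rcases sq_eq_sq_iff_eq_or_eq_neg.1 hc with rfl | rfl <;> simp [hML, mul_assoc]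
  · rintro ⟨Q, hQ, h⟩
    obtain ⟨c, L, hL, hML⟩ : ∃ (c : ℂ) (L : QMat n), (L = Z ∨ L = g 0 ∨ L = g 0 * Z) ∧
        M = c • (L * Q) := by
      rcases h with h | h | h | h | h | h
      · exact ⟨1, Z, by simp, by simp [h]⟩
      · exact ⟨-1, Z, by simp, by simp [h]⟩
      · exact ⟨1, g 0, by simp, by simp [h]⟩
      · exact ⟨-1, g 0, by simp, by simp [h]⟩
      · exact ⟨Complex.I, g 0 * Z, by simp, by simp [h, mul_assoc]⟩
      · exact ⟨-Complex.I, g 0 * Z, by simp, by simp [h, mul_assoc]⟩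
    have hMG : ∀ R ∈ G, R * M = M * R := by
      intro R hR
      rw [hML, mul_smul_comm, smul_mul_assoc, ← mul_assoc, ← F.logical_mul_G hL hR, mul_assoc,
        F.G_mul_G hR hQ, mul_assoc]
    refine F.pauliDichotomy_of_logical hL hQ hMP hML hm (fun R hR => ?_) ?_
    · have hcommute : R * ((2 : ℂ)⁻¹ • (1 + m • M)) = ((2 : ℂ)⁻¹ • (1 + m • M)) * R := by
        simp only [mul_smul_comm, smul_mul_assoc, mul_add, add_mul, mul_one, one_mul, hMG R hR]
      rw [mulVec_mulVec, hcommute, ← mulVec_mulVec, hGφ R hR]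
    · have hm2 : m * m = 1 := by rcases hm with rfl | rfl <;> norm_num
      rw [mulVec_mulVec, ← smul_mulVec]
      congr 1
      rw [mul_smul_comm, mul_add, mul_smul_comm, hMM, mul_one, smul_comm m, smul_add m,
        smul_smul m m, hm2, one_smul, add_comm]

end PaperFormal
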